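/- For a C_3-frame A, consider the multiset Φ(A) = {⟨φ,a⟩ : a ∈ A} of six values. Say A is of type I if Φ(A) ⊆ {1/2, −1/2}; of type II_0 if Φ(A) = {0,0,0,0,0,0}; of type II_1 if Φ(A) = {1, −1, 0, 0, 0, 0}; of type II_2 if Φ(A) = {1, 1, −1, −1, 0, 0}. Then every C_3-frame is of exactly one of these four types; the numbers of C_3-frames of types I, II_0, II_1, II_2 are 4032, 1260, 1890 and 378 respectively; and each of the four sets of frames of a given type is a single orbit under the action of W(E7) given by A ↦ w(A). -/

import Mathlib

noncomputable section

/-- `V = ℂ^8`. -/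
abbrev V8 : Type := Fin 8 → ℂ

/-- The symmetric bilinear form `⟨x,y⟩ = ∑ᵢ xᵢ yᵢ` on `V`. -/
def ip (x y : V8) : ℂ := ∑ i, x i * y i

/-- `φ = (1/2, …, 1/2)`. -/
def phi8 : V8 := fun _ => (1 : ℂ) / 2

/-- `x` has all coordinates in `ℤ`. -/
def IsIntVec (x : V8) : Prop := ∀ i, ∃ n : ℤ, x i = (n : ℂ)

/-- The `E₈` root lattice `P = {a ∈ ℤ⁸ ∪ (φ + ℤ⁸) : ⟨φ,a⟩ ∈ ℤ}`. -/
def E8lat : Set V8 :=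
  {a | (IsIntVec a ∨ IsIntVec (a - phi8)) ∧ ∃ n : ℤ, ip phi8 a = (n : ℂ)}

/-- A `C_l`-frame relative to `P`: a set `A = {±a₀, …, ±a_{l-1}}` with
`⟨aᵢ,aⱼ⟩ = δᵢⱼ`, `aᵢ ± aⱼ ∈ P` for `i < j`, and `2aᵢ ∈ P`. -/
def IsClFrame (l : ℕ) (A : Set V8) : Prop :=
  ∃ a : Fin l → V8,
    A = Set.range a ∪ Set.range (fun i => -a i) ∧
    (∀ i j, ip (a i) (a j) = if i = j then 1 else 0) ∧
    (∀ i j, i < j → a i + a j ∈ E8lat ∧ a i - a j ∈ E8lat) ∧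
    (∀ i, (2 : ℂ) • a i ∈ E8lat)

/-- `w` is the reflection `r_α(v) = v − ⟨α,v⟩α` for some root `α ∈ Δ(E₇)`,
i.e. `α ∈ Δ(E₈)` with `⟨φ,α⟩ = 0`. -/
def IsE7Reflection (w : V8 ≃ₗ[ℂ] V8) : Prop :=
  ∃ α, α ∈ E8lat ∧ ip α α = 2 ∧ ip phi8 α = 0 ∧ ∀ v, w v = v - ip α v • α

/-- The Weyl group `W(E₇)`, generated by the reflections in roots of `Δ(E₇)`. -/
def WE7 : Subgroup (V8 ≃ₗ[ℂ] V8) := Subgroup.closure {w | IsE7Reflection w}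

/-- Type I: `Φ(A) ⊆ {1/2, −1/2}`. -/
def C3TypeI (A : Set V8) : Prop :=
  ∀ a ∈ A, ip phi8 a = 1 / 2 ∨ ip phi8 a = -(1 / 2)

/-- Type II₀: `Φ(A) = {0,0,0,0,0,0}`. -/
def C3TypeII0 (A : Set V8) : Prop := ∀ a ∈ A, ip phi8 a = 0

/-- Type II₁: `Φ(A) = {1, −1, 0, 0, 0, 0}` as a multiset. -/
def C3TypeII1 (A : Set V8) : Prop :=
  {a ∈ A | ip phi8 a = 1}.ncard = 1 ∧ {a ∈ A | ip phi8 a = -1}.ncard = 1 ∧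
  {a ∈ A | ip phi8 a = 0}.ncard = 4

/-- Type II₂: `Φ(A) = {1, 1, −1, −1, 0, 0}` as a multiset. -/
def C3TypeII2 (A : Set V8) : Prop :=
  {a ∈ A | ip phi8 a = 1}.ncard = 2 ∧ {a ∈ A | ip phi8 a = -1}.ncard = 2 ∧
  {a ∈ A | ip phi8 a = 0}.ncard = 2


/-! ### The bilinear form and the lattice -/

lemma ip_eq (x y : V8) : ip x y = x 0 * y 0 + x 1 * y 1 + x 2 * y 2 + x 3 * y 3 + x 4 * y 4
    + x 5 * y 5 + x 6 * y 6 + x 7 * y 7 := by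
  simp [ip, Fin.sum_univ_eight]

lemma ip_comm (x y : V8) : ip x y = ip y x := by
  simp [ip, mul_comm]

lemma ip_add_right (x y z : V8) : ip x (y + z) = ip x y + ip x z := by
  simp [ip, mul_add, Finset.sum_add_distrib]

lemma ip_sub_right (x y z : V8) : ip x (y - z) = ip x y - ip x z := by
  simp [ip, mul_sub, Finset.sum_sub_distrib]

lemma ip_neg_right (x y : V8) : ip x (-y) = -ip x y := by
  simp [ip]

lemma ip_smul_right (c : ℂ) (x y : V8) : ip x (c • y) = c * ip x y := by
  simp [ip, Finset.mul_sum, mul_left_comm]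

lemma ip_sub_left (x y z : V8) : ip (x - y) z = ip x z - ip y z := by
  rw [ip_comm, ip_sub_right, ip_comm z, ip_comm z]

lemma ip_neg_left (x y : V8) : ip (-x) y = -ip x y := by
  rw [ip_comm, ip_neg_right, ip_comm]

lemma ip_smul_left (c : ℂ) (x y : V8) : ip (c • x) y = c * ip x y := by
  rw [ip_comm, ip_smul_right, ip_comm]

/-- `ip α` as a linear functional. -/
def ipL (α : V8) : Module.Dual ℂ V8 where
  toFun := ip α
  map_add' := ip_add_right α
  map_smul' c x := ip_smul_right c α x

lemma lat_iff (p : V8) : p ∈ E8lat ↔ ∃ y : Fin 8 → ℤ, (∀ i, p i = (y i : ℂ) / 2) ∧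
    (∀ i, (2 : ℤ) ∣ y i - y 0) ∧ (4 : ℤ) ∣ ∑ i, y i := by
  constructor
  · rintro ⟨h, m, hm⟩
    have key : ∃ y : Fin 8 → ℤ, (∀ i, p i = (y i : ℂ) / 2) ∧ (∀ i, (2 : ℤ) ∣ y i - y 0) := by
      rcases h with h | h
      · choose n hn using h
        refine ⟨fun i => 2 * n i, fun i => ?_, fun i => ⟨n i - n 0, by ring⟩⟩
        rw [hn i]; push_cast; ring
      · choose n hn using h
        refine ⟨fun i => 2 * n i + 1, fun i => ?_, fun i => ⟨n i - n 0, by ring⟩⟩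
        have := hn i
        simp only [Pi.sub_apply, phi8] at this
        have h2 : p i = n i + 1 / 2 := by rw [← this]; ring
        rw [h2]; push_cast; ring
    obtain ⟨y, hy, hp⟩ := key
    refine ⟨y, hy, hp, m, ?_⟩
    have : ((∑ i, y i : ℤ) : ℂ) = ((4 * m : ℤ) : ℂ) := by
      push_cast
      rw [← hm, ip, Finset.mul_sum]
      refine Finset.sum_congr rfl fun i _ => ?_
      rw [hy i, phi8]; ring
    exact_mod_cast this
  · rintro ⟨y, hy, hp, m, hm⟩
    refine ⟨?_, m, ?_⟩
    · rcases Int.even_or_odd (y 0) with ⟨k, hk⟩ | ⟨k, hk⟩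
      · left
        intro i
        obtain ⟨l, hl⟩ := hp i
        refine ⟨l + k, ?_⟩
        have : y i = 2 * (l + k) := by omega
        rw [hy i, this]; push_cast; ring
      · right
        intro i
        obtain ⟨l, hl⟩ := hp i
        refine ⟨l + k, ?_⟩
        have : y i = 2 * (l + k) + 1 := by omega
        simp only [Pi.sub_apply, phi8]
        rw [hy i, this]; push_cast; ring
    · have : ((∑ i, y i : ℤ) : ℂ) = ((4 * m : ℤ) : ℂ) := by rw [hm]
      push_cast at this
      have h4 : (4 : ℂ) * ip phi8 p = 4 * m := by
        rw [← this, ip, Finset.mul_sum]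
        refine Finset.sum_congr rfl fun i _ => ?_
        rw [hy i, phi8]; ring
      exact mul_left_cancel₀ (by norm_num) h4

lemma lat_add {p q : V8} (hp : p ∈ E8lat) (hq : q ∈ E8lat) : p + q ∈ E8lat := by
  rw [lat_iff] at *
  obtain ⟨y, h1, h2, h3⟩ := hp
  obtain ⟨z, g1, g2, g3⟩ := hq
  refine ⟨fun i => y i + z i, fun i => ?_, fun i => ?_, ?_⟩
  · rw [Pi.add_apply, h1, g1]; push_cast; ring
  · have := h2 i; have := g2 i; dsimp only; omega
  · rw [Finset.sum_add_distrib]; exact dvd_add h3 g3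

lemma lat_zsmul (c : ℤ) {p : V8} (hp : p ∈ E8lat) : (c : ℂ) • p ∈ E8lat := by
  rw [lat_iff] at *
  obtain ⟨y, h1, h2, h3⟩ := hp
  refine ⟨fun i => c * y i, fun i => ?_, fun i => ?_, ?_⟩
  · rw [Pi.smul_apply, h1, smul_eq_mul]; push_cast; ring
  · rw [← mul_sub]; exact dvd_mul_of_dvd_right (h2 i) _
  · rw [← Finset.mul_sum]; exact dvd_mul_of_dvd_right h3 _

lemma lat_neg {p : V8} (hp : p ∈ E8lat) : -p ∈ E8lat := by
  have := lat_zsmul (-1) hp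
  simpa using this

lemma lat_sub {p q : V8} (hp : p ∈ E8lat) (hq : q ∈ E8lat) : p - q ∈ E8lat := by
  rw [sub_eq_add_neg]; exact lat_add hp (lat_neg hq)

lemma lat_ip {p q : V8} (hp : p ∈ E8lat) (hq : q ∈ E8lat) : ∃ n : ℤ, ip p q = n := by
  rw [lat_iff] at *
  obtain ⟨y, h1, h2, h3⟩ := hp
  obtain ⟨z, g1, g2, g3⟩ := hq
  choose k hk using h2
  choose l hl using g2
  have hy : ∀ i, y i = y 0 + 2 * k i := fun i => by linarith [hk i]
  have hz : ∀ i, z i = z 0 + 2 * l i := fun i => by linarith [hl i]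
  generalize y 0 = c at *
  generalize z 0 = d at *
  obtain ⟨m, hm⟩ := h3
  obtain ⟨n, hn⟩ := g3
  have hK : ∑ i, k i = 2 * (m - 2 * c) := by
    have : ∑ i, y i = 8 * c + 2 * ∑ i, k i := by
      simp_rw [hy]; rw [Finset.sum_add_distrib, ← Finset.mul_sum]; simp
    linarith
  have hL : ∑ i, l i = 2 * (n - 2 * d) := by
    have : ∑ i, z i = 8 * d + 2 * ∑ i, l i := by
      simp_rw [hz]; rw [Finset.sum_add_distrib, ← Finset.mul_sum]; simp
    linarith
  have hS : ∑ i, y i * z i = 4 * (2 * c * d + c * (n - 2 * d) + d * (m - 2 * c)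
      + ∑ i, k i * l i) := by
    have : ∑ i, y i * z i = 8 * (c * d) + 2 * c * ∑ i, l i + 2 * d * ∑ i, k i
        + 4 * ∑ i, k i * l i := by
      have e : ∀ i, y i * z i = c * d + 2 * c * l i + 2 * d * k i + 4 * (k i * l i) := by
        intro i; rw [hy, hz]; ring
      simp_rw [e]
      simp only [Finset.sum_add_distrib, ← Finset.mul_sum]
      simp
      ring
    rw [this, hK, hL]; ring
  refine ⟨2 * c * d + c * (n - 2 * d) + d * (m - 2 * c) + ∑ i, k i * l i, ?_⟩
  have h4 : (4 : ℂ) * ip p q = ((∑ i, y i * z i : ℤ) : ℂ) := by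
    rw [ip, Finset.mul_sum]; push_cast
    refine Finset.sum_congr rfl fun i _ => ?_
    rw [h1, g1]; ring
  rw [hS] at h4
  refine mul_left_cancel₀ (a := (4 : ℂ)) (by norm_num) (h4.trans ?_)
  push_cast; ring

lemma phi_lat {p : V8} (hp : p ∈ E8lat) : ∃ n : ℤ, ip phi8 p = n := hp.2

/-! ### Reflections and the Weyl group -/

/-- The reflection in a vector of norm two. -/
def rf (α : V8) (h : ip α α = 2) : V8 ≃ₗ[ℂ] V8 :=
  Module.reflection (f := ipL α) (x := α) h

lemma rf_apply (α : V8) (h : ip α α = 2) (v : V8) : rf α h v = v - ip α v • α := rfl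

lemma rf_mem (α : V8) (h : ip α α = 2) (hl : α ∈ E8lat) (hp : ip phi8 α = 0) :
    rf α h ∈ WE7 :=
  Subgroup.subset_closure ⟨α, hl, h, hp, fun _ => rfl⟩

/-- The invariance properties of elements of the Weyl group. -/
def Good (w : V8 ≃ₗ[ℂ] V8) : Prop :=
  (∀ x y, ip (w x) (w y) = ip x y) ∧ (∀ v, ip phi8 (w v) = ip phi8 v) ∧
    ∀ p, w p ∈ E8lat ↔ p ∈ E8lat

lemma good_of_mem {w : V8 ≃ₗ[ℂ] V8} (hw : w ∈ WE7) : Good w := by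
  induction hw using Subgroup.closure_induction with
  | mem w hw =>
    obtain ⟨α, hl, h2, hp, hv⟩ := hw
    have fwd : ∀ p, p ∈ E8lat → w p ∈ E8lat := by
      intro p hpl
      obtain ⟨n, hn⟩ := lat_ip hl hpl
      rw [hv, hn]
      exact lat_sub hpl (lat_zsmul n hl)
    have inv : ∀ p, w (w p) = p := by
      intro p
      rw [hv (w p), hv p, ip_sub_right, ip_smul_right, h2]
      module
    refine ⟨fun x y => ?_, fun v => ?_, fun p => ⟨fun h => ?_, fwd p⟩⟩
    · rw [hv, hv, ip_sub_left, ip_sub_right, ip_sub_right, ip_smul_left, ip_smul_left,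
        ip_smul_right, ip_smul_right, h2, ip_comm x α]; ring
    · rw [hv, ip_sub_right, ip_smul_right, hp]; ring
    · have := fwd _ h; rwa [inv] at this
  | one => exact ⟨fun _ _ => rfl, fun _ => rfl, fun _ => Iff.rfl⟩
  | mul x y _ _ hx hy =>
    exact ⟨fun a b => (hx.1 _ _).trans (hy.1 _ _), fun a => (hx.2.1 _).trans (hy.2.1 _),
      fun p => (hx.2.2 _).trans (hy.2.2 _)⟩
  | inv x _ hx =>
    have e : ∀ p, x (x⁻¹ p) = p := fun p => x.apply_symm_apply p
    refine ⟨fun a b => ?_, fun a => ?_, fun p => ?_⟩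
    · rw [← hx.1, e, e]
    · rw [← hx.2.1, e]
    · rw [← hx.2.2, e]

lemma frame_image {l : ℕ} {w : V8 ≃ₗ[ℂ] V8} (hw : w ∈ WE7) {A : Set V8} (h : IsClFrame l A) :
    IsClFrame l (w '' A) := by
  obtain ⟨h1, h2, h3⟩ := good_of_mem hw
  obtain ⟨a, rfl, ha, hs, hd⟩ := h
  refine ⟨fun i => w (a i), ?_, fun i j => ?_, fun i j hij => ?_, fun i => ?_⟩
  · rw [Set.image_union, ← Set.range_comp, ← Set.range_comp]
    congr 1
    congr 1
    funext i
    simp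
  · rw [h1, ha]
  · rw [← map_add, ← map_sub, h3, h3]; exact hs i j hij
  · rw [← map_smul, h3]; exact hd i

lemma level_image {w : V8 ≃ₗ[ℂ] V8} (hw : w ∈ WE7) (A : Set V8) (c : ℂ) :
    {a ∈ w '' A | ip phi8 a = c}.ncard = {a ∈ A | ip phi8 a = c}.ncard := by
  have : {a ∈ w '' A | ip phi8 a = c} = w '' {a ∈ A | ip phi8 a = c} := by
    ext x
    constructor
    · rintro ⟨⟨a, ha, rfl⟩, h⟩
      exact ⟨a, ⟨ha, by rwa [(good_of_mem hw).2.1] at h⟩, rfl⟩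
    · rintro ⟨a, ⟨ha, h⟩, rfl⟩
      exact ⟨⟨a, ha, rfl⟩, by rwa [(good_of_mem hw).2.1]⟩
  rw [this, Set.ncard_image_of_injective _ w.injective]

lemma typeI_image {w : V8 ≃ₗ[ℂ] V8} (hw : w ∈ WE7) {A : Set V8} (h : C3TypeI A) :
    C3TypeI (w '' A) := by
  rintro _ ⟨a, ha, rfl⟩
  rw [(good_of_mem hw).2.1]; exact h a ha

lemma typeII0_image {w : V8 ≃ₗ[ℂ] V8} (hw : w ∈ WE7) {A : Set V8} (h : C3TypeII0 A) :
    C3TypeII0 (w '' A) := by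
  rintro _ ⟨a, ha, rfl⟩
  rw [(good_of_mem hw).2.1]; exact h a ha

lemma typeII1_image {w : V8 ≃ₗ[ℂ] V8} (hw : w ∈ WE7) {A : Set V8} (h : C3TypeII1 A) :
    C3TypeII1 (w '' A) := by
  unfold C3TypeII1 at *
  rwa [level_image hw, level_image hw, level_image hw]

lemma typeII2_image {w : V8 ≃ₗ[ℂ] V8} (hw : w ∈ WE7) {A : Set V8} (h : C3TypeII2 A) :
    C3TypeII2 (w '' A) := by
  unfold C3TypeII2 at *
  rwa [level_image hw, level_image hw, level_image hw]

/-! ### Explicit data: 135 words of reflections, giving the 135 full frames -/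

/-- The sign vector of a bit mask. -/
def eps (m : ℕ) (i : Fin 8) : ℤ := if m.testBit i then 1 else -1

def dotZ (x y : Fin 8 → ℤ) : ℤ :=
  x 0 * y 0 + x 1 * y 1 + x 2 * y 2 + x 3 * y 3 + x 4 * y 4 + x 5 * y 5 + x 6 * y 6 + x 7 * y 7

/-- Four times the reflection in the root `eps m / 2`. -/
def rfZ (m : ℕ) (x : Fin 8 → ℤ) : Fin 8 → ℤ := fun i => 4 * x i - dotZ (eps m) x * eps m i

def wordsI : List (ℕ × ℕ × ℕ) := [
    (15, 15, 15), (15, 15, 23), (15, 15, 27), (15, 15, 29), (15, 15, 39), (15, 15, 43),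
    (15, 15, 45), (15, 15, 51), (15, 15, 53), (15, 15, 57), (15, 15, 71), (15, 15, 75),
    (15, 15, 77), (15, 15, 83), (15, 15, 85), (15, 15, 89), (15, 15, 99), (15, 15, 101),
    (15, 15, 105), (15, 15, 113), (15, 15, 135), (15, 15, 139), (15, 15, 141), (15, 15, 147),
    (15, 15, 149), (15, 15, 153), (15, 15, 163), (15, 15, 165), (15, 15, 169), (15, 15, 177),
    (15, 15, 195), (15, 15, 197), (15, 15, 201), (15, 15, 209), (15, 15, 225), (15, 23, 15),
    (15, 23, 51), (15, 23, 53), (15, 23, 57), (15, 23, 83), (15, 23, 85), (15, 23, 89),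
    (15, 23, 99), (15, 23, 101), (15, 23, 105), (15, 23, 147), (15, 23, 149), (15, 23, 153),
    (15, 23, 163), (15, 23, 165), (15, 23, 169), (15, 23, 195), (15, 23, 197), (15, 23, 201),
    (15, 27, 57), (15, 27, 89), (15, 27, 99), (15, 27, 101), (15, 27, 153), (15, 27, 163),
    (15, 27, 165), (15, 27, 195), (15, 27, 197), (15, 29, 99), (15, 29, 163), (15, 29, 195),
    (15, 39, 57), (15, 39, 195), (15, 39, 197), (15, 43, 195), (15, 51, 195), (23, 51, 195)]

def wordsII : List (ℕ × ℕ × ℕ) := [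
    (15, 15, 15), (15, 15, 23), (15, 15, 27), (15, 15, 29), (15, 15, 39), (15, 15, 43),
    (15, 15, 45), (15, 15, 71), (15, 15, 75), (15, 15, 77), (15, 15, 113), (15, 15, 135),
    (15, 15, 139), (15, 15, 141), (15, 15, 177), (15, 15, 209), (15, 15, 225), (15, 23, 15),
    (15, 23, 27), (15, 23, 29), (15, 23, 39), (15, 23, 43), (15, 23, 45), (15, 23, 71),
    (15, 23, 75), (15, 23, 77), (15, 23, 113), (15, 23, 135), (15, 23, 139), (15, 23, 141),
    (15, 23, 177), (15, 23, 209), (15, 23, 225), (15, 27, 43), (15, 27, 45), (15, 27, 75),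
    (15, 27, 77), (15, 27, 113), (15, 27, 139), (15, 27, 141), (15, 27, 177), (15, 27, 209),
    (15, 29, 45), (15, 29, 77), (15, 29, 113), (15, 29, 141), (15, 29, 177), (15, 29, 209),
    (15, 39, 209), (15, 71, 177), (15, 113, 15), (23, 15, 27), (23, 15, 29), (23, 15, 39),
    (23, 15, 71), (23, 15, 135), (23, 15, 225), (27, 15, 29), (27, 15, 225), (29, 15, 225),
    (39, 15, 71), (39, 15, 135), (71, 15, 135)]

/-- The two base frames (scaled by two). -/
def baseZ : Bool → Fin 8 → Fin 8 → ℤ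
  | true => ![![2, 0, 0, 0, 0, 0, 0, 0], ![0, 2, 0, 0, 0, 0, 0, 0], ![0, 0, 2, 0, 0, 0, 0, 0],
      ![0, 0, 0, 2, 0, 0, 0, 0], ![0, 0, 0, 0, 2, 0, 0, 0], ![0, 0, 0, 0, 0, 2, 0, 0],
      ![0, 0, 0, 0, 0, 0, 2, 0], ![0, 0, 0, 0, 0, 0, 0, 2]]
  | false => ![![1, 1, 1, 1, 0, 0, 0, 0], ![0, 0, 0, 0, 1, 1, 1, 1],
      ![1, 1, -1, -1, 0, 0, 0, 0], ![1, -1, 1, -1, 0, 0, 0, 0], ![1, -1, -1, 1, 0, 0, 0, 0],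
      ![0, 0, 0, 0, 1, 1, -1, -1], ![0, 0, 0, 0, 1, -1, 1, -1], ![0, 0, 0, 0, 1, -1, -1, 1]]

abbrev Idx : Type := Bool × ℕ × ℕ × ℕ

def allW : List Idx := wordsI.map (Prod.mk true) ++ wordsII.map (Prod.mk false)

/-- The image of the first base vector, scaled by `2 * 4 ^ 3`. -/
def headZ (q : Idx) : Fin 8 → ℤ := rfZ q.2.1 (rfZ q.2.2.1 (rfZ q.2.2.2 (baseZ q.1 0)))

def keyL (x : Fin 8 → ℤ) : List ℤ :=
  [x 0 % 64, (x 1 - x 0) % 128, (x 2 - x 0) % 128, (x 3 - x 0) % 128, (x 4 - x 0) % 128,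
    (x 5 - x 0) % 128, (x 6 - x 0) % 128, (x 7 - x 0) % 128]

def keyQ (q : Idx) : Bool × List ℤ := (q.1, keyL (headZ q))

lemma keys_nodup : (allW.map keyQ).Nodup := by decide +kernel

lemma allW_nodup : allW.Nodup := keys_nodup.of_map _

lemma allW_length : allW.length = 135 := by decide +kernel

lemma allW_I : (allW.filter fun q => q.1 = true).length = 72 := by decide +kernel

lemma allW_II : (allW.filter fun q => q.1 = false).length = 63 := by decide +kernel

lemma masks_ok : ∀ q ∈ allW, (∑ i, eps q.2.1 i = 0) ∧ (∑ i, eps q.2.2.1 i = 0) ∧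
    (∑ i, eps q.2.2.2 i = 0) := by decide +kernel

attribute [irreducible] allW

/-- The vector with `2 a = x`. -/
def hv (x : Fin 8 → ℤ) : V8 := fun i => (x i : ℂ) / 2

lemma ip_hv (x y : Fin 8 → ℤ) : ip (hv x) (hv y) = (dotZ x y : ℂ) / 4 := by
  rw [ip_eq]; simp only [hv, dotZ]; push_cast; ring

lemma phi_hv (x : Fin 8 → ℤ) : ip phi8 (hv x) = ((∑ i, x i : ℤ) : ℂ) / 4 := by
  rw [ip_eq, Fin.sum_univ_eight]; simp only [hv, phi8]; push_cast; ring

lemma hv_lat (x : Fin 8 → ℤ) (h1 : ∀ i, (2 : ℤ) ∣ x i - x 0) (h2 : (4 : ℤ) ∣ ∑ i, x i) :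
    hv x ∈ E8lat := (lat_iff _).2 ⟨x, fun _ => rfl, h1, h2⟩

lemma eps_sq (m : ℕ) (i : Fin 8) : eps m i * eps m i = 1 := by
  unfold eps; split_ifs <;> norm_num

lemma eps_norm (m : ℕ) : ip (hv (eps m)) (hv (eps m)) = 2 := by
  rw [ip_hv, dotZ]; simp only [eps_sq]; norm_num

/-- The reflection in the root `eps m / 2`. -/
def rm (m : ℕ) : V8 ≃ₗ[ℂ] V8 := rf (hv (eps m)) (eps_norm m)

lemma rm_mem {m : ℕ} (h : ∑ i, eps m i = 0) : rm m ∈ WE7 := by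
  refine rf_mem _ _ (hv_lat _ (fun i => ?_) (by rw [h]; exact dvd_zero _)) (by rw [phi_hv, h]; simp)
  unfold eps; split_ifs <;> norm_num

lemma hv_rfZ (m : ℕ) (x : Fin 8 → ℤ) : hv (rfZ m x) = (4 : ℂ) • rm m (hv x) := by
  rw [rm, rf_apply, ip_hv]
  funext i
  simp only [hv, rfZ, Pi.smul_apply, Pi.sub_apply, smul_eq_mul]
  push_cast; ring

def wordE (q : Idx) : V8 ≃ₗ[ℂ] V8 := rm q.2.1 * (rm q.2.2.1 * rm q.2.2.2)

lemma wordE_mem {q : Idx} (hq : q ∈ allW) : wordE q ∈ WE7 := by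
  obtain ⟨h1, h2, h3⟩ := masks_ok q hq
  exact mul_mem (rm_mem h1) (mul_mem (rm_mem h2) (rm_mem h3))

def base (t : Bool) (j : Fin 8) : V8 := hv (baseZ t j)

/-- The 135 full frames. -/
def vv (q : Idx) (j : Fin 8) : V8 := wordE q (base q.1 j)

lemma hv_headZ (q : Idx) : hv (headZ q) = (64 : ℂ) • vv q 0 := by
  rw [headZ, hv_rfZ, hv_rfZ, hv_rfZ, map_smul, map_smul, map_smul, smul_smul, smul_smul]
  norm_num
  rfl

/-- A full frame. -/
structure Oct (v : Fin 8 → V8) : Prop where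
  orth : ∀ j k, ip (v j) (v k) = if j = k then 1 else 0
  dif : ∀ j k, v j - v k ∈ E8lat
  dbl : ∀ j, (2 : ℂ) • v j ∈ E8lat

lemma base_oct (t : Bool) : Oct (base t) := by
  refine ⟨fun j k => ?_, fun j k => ?_, fun j => ?_⟩
  · rw [base, base, ip_hv]
    have : ∀ t j k, dotZ (baseZ t j) (baseZ t k) = if j = k then 4 else 0 := by decide +kernel
    rw [this]; split_ifs <;> norm_num
  · have e : base t j - base t k = hv (fun i => baseZ t j i - baseZ t k i) := by
      funext i; simp only [base, hv, Pi.sub_apply]; push_cast; ring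
    rw [e]
    refine hv_lat _ ?_ ?_
    · clear e; revert t j k; decide +kernel
    · clear e; revert t j k; decide +kernel
  · have e : (2 : ℂ) • base t j = hv (fun i => 2 * baseZ t j i) := by
      funext i; simp only [base, hv, Pi.smul_apply, smul_eq_mul]; push_cast; ring
    rw [e]
    refine hv_lat _ ?_ ?_
    · clear e; revert t j; decide +kernel
    · clear e; revert t j; decide +kernel

lemma vv_oct {q : Idx} (hq : q ∈ allW) : Oct (vv q) := by
  obtain ⟨h1, h2, h3⟩ := good_of_mem (wordE_mem hq)
  have hb := base_oct q.1
  refine ⟨fun j k => ?_, fun j k => ?_, fun j => ?_⟩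
  · rw [vv, vv, h1]; exact hb.orth j k
  · rw [vv, vv, ← map_sub, h3]; exact hb.dif j k
  · rw [vv, ← map_smul, h3]; exact hb.dbl j

/-- The values of `φ` on the base frames. -/
def val (t : Bool) (j : Fin 8) : ℂ := if t then 1 / 2 else if j < 2 then 1 else 0

lemma phi_base (t : Bool) (j : Fin 8) : ip phi8 (base t j) = val t j := by
  rw [base, phi_hv]
  have : ∀ t j, ∑ i, baseZ t j i = if t then 2 else if j < 2 then 4 else 0 := by decide +kernel
  rw [this, val]
  split_ifs <;> norm_num

lemma phi_vv {q : Idx} (hq : q ∈ allW) (j : Fin 8) : ip phi8 (vv q j) = val q.1 j := by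
  rw [vv, (good_of_mem (wordE_mem hq)).2.1, phi_base]

lemma half_ne_int (n : ℤ) (h : (2 : ℂ) * n = 1) : False := by
  have : (2 * n : ℤ) = 1 := by exact_mod_cast h
  omega

lemma vv_sep0 {q q' : Idx} (hq : q ∈ allW) (hq' : q' ∈ allW) (h : vv q 0 - vv q' 0 ∈ E8lat) :
    q = q' := by
  have ht : q.1 = q'.1 := by
    obtain ⟨n, hn⟩ := phi_lat h
    rw [ip_sub_right, phi_vv hq, phi_vv hq'] at hn
    rcases h1 : q.1 <;> rcases h2 : q'.1 <;> simp [h1, h2, val] at hn ⊢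
    · exact half_ne_int n (by rw [← hn]; norm_num)
    · exact half_ne_int (-n) (by push_cast; rw [← hn]; norm_num)
  refine List.inj_on_of_nodup_map keys_nodup hq hq' ?_
  rw [keyQ, keyQ, ht]
  congr 1
  obtain ⟨y, hy, hp, -⟩ := (lat_iff _).1 h
  have e : ∀ i, headZ q i - headZ q' i = 64 * y i := by
    intro i
    have h1 := congrFun (hv_headZ q) i
    have h2 := congrFun (hv_headZ q') i
    have h3 := hy i
    simp only [hv, Pi.smul_apply, Pi.sub_apply, smul_eq_mul] at h1 h2 h3
    have : ((headZ q i - headZ q' i : ℤ) : ℂ) = ((64 * y i : ℤ) : ℂ) := by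
      push_cast
      linear_combination 2 * h1 - 2 * h2 + 128 * h3
    exact_mod_cast this
  have e0 := e 0
  have d : ∀ i, (headZ q i - headZ q 0) % 128 = (headZ q' i - headZ q' 0) % 128 := by
    intro i
    obtain ⟨k, hk⟩ := hp i
    have := e i
    omega
  have d0 : headZ q 0 % 64 = headZ q' 0 % 64 := by omega
  rw [keyL, keyL, d0, d, d, d, d, d, d, d]

lemma vv_sep {q q' : Idx} (hq : q ∈ allW) (hq' : q' ∈ allW) {j j' : Fin 8}
    (h : vv q j - vv q' j' ∈ E8lat) : q = q' := by
  refine vv_sep0 hq hq' ?_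
  have := lat_add (lat_add ((vv_oct hq).dif 0 j) h) ((vv_oct hq').dif j' 0)
  convert this using 1
  abel

lemma oct_inj {v : Fin 8 → V8} (h : Oct v) {j k : Fin 8} (e : v j = v k ∨ v j = -v k) :
    j = k := by
  by_contra hne
  have h1 := h.orth j k
  have h2 := h.orth k k
  rw [if_neg hne] at h1
  rw [if_pos rfl] at h2
  rcases e with e | e <;> rw [e] at h1
  · rw [h1] at h2; exact zero_ne_one h2
  · rw [ip_neg_left, h2] at h1; norm_num at h1

lemma oct_neg {v : Fin 8 → V8} (h : Oct v) (j : Fin 8) : v j ≠ -v j := by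
  intro e
  have h2 := h.orth j j
  rw [if_pos rfl] at h2
  have h3 : ip (v j) (v j) = ip (v j) (-v j) := by rw [← e]
  rw [ip_neg_right, h2] at h3
  norm_num at h3

/-! ### All unit vectors `a` with `2 a` in the lattice -/

def Valid : Set V8 := {a | ip a a = 1 ∧ (2 : ℂ) • a ∈ E8lat}

/-- All lists of length `n` with entries in `cs` and sum of squares `N`. -/
def enumL (cs : List ℤ) : ℕ → ℤ → List (List ℤ)
  | 0, N => if N = 0 then [[]] else []
  | n + 1, N => cs.flatMap fun c => if c * c ≤ N then (enumL cs n (N - c * c)).map (c :: ·) else []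

lemma mem_enumL (cs : List ℤ) (l : List ℤ) (h : ∀ c ∈ l, c ∈ cs) :
    l ∈ enumL cs l.length (l.map fun c => c * c).sum := by
  induction l with
  | nil => simp [enumL]
  | cons c l ih =>
    have hl := ih fun x hx => h x (List.mem_cons_of_mem _ hx)
    simp only [List.length_cons, List.map_cons, List.sum_cons, enumL, List.mem_flatMap]
    refine ⟨c, h c List.mem_cons_self, ?_⟩
    have hnn : 0 ≤ (l.map fun c => c * c).sum := by
      apply List.sum_nonneg
      intro x hx
      obtain ⟨y, -, rfl⟩ := List.mem_map.1 hx
      exact mul_self_nonneg y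
    rw [if_pos (by linarith)]
    rw [add_sub_cancel_left]
    exact List.mem_map.2 ⟨l, hl, rfl⟩

def evenL : List (List ℤ) := enumL [-2, -1, 0, 1, 2] 8 4

def oddL : List (List ℤ) := (enumL [-3, -1, 1, 3] 8 16).filter fun l => l.sum % 4 = 0

lemma evenL_length : evenL.length = 1136 := by decide +kernel

lemma oddL_length : oddL.length = 1024 := by decide +kernel

attribute [irreducible] evenL oddL

def vE (l : List ℤ) : V8 := fun i => (l.getD i 0 : ℂ) / 2

def vO (l : List ℤ) : V8 := fun i => (l.getD i 0 : ℂ) / 4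

def validF : Finset V8 := by
  classical exact (evenL.map vE ++ oddL.map vO).toFinset

lemma validF_card : validF.card ≤ 2160 := by
  classical
  unfold validF
  refine (List.toFinset_card_le _).trans ?_
  rw [List.length_append, List.length_map, List.length_map, evenL_length, oddL_length]

lemma valid_sub : Valid ⊆ validF := by
  classical
  rintro a ⟨h1, h2⟩
  obtain ⟨y, hy, hp, hs⟩ := (lat_iff _).1 h2
  have ha : ∀ i, a i = (y i : ℂ) / 4 := by
    intro i
    have := hy i
    rw [Pi.smul_apply, smul_eq_mul] at this
    linear_combination this / 2
  have hn : ∑ i, y i * y i = 16 := by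
    have : ((∑ i, y i * y i : ℤ) : ℂ) = ((16 : ℤ) : ℂ) := by
      rw [ip] at h1
      simp only [ha] at h1
      push_cast
      have h3 : ∑ i, (y i : ℂ) * y i = 16 * ∑ i, (y i : ℂ) / 4 * (y i / 4) := by
        rw [Finset.mul_sum]
        refine Finset.sum_congr rfl fun i _ => ?_
        ring
      rw [h3, h1]; norm_num
    exact_mod_cast this
  simp only [validF, List.coe_toFinset, Set.mem_ofPred_eq, List.mem_append, List.mem_map]
  have get : ∀ (z : Fin 8 → ℤ) (i : Fin 8), (List.ofFn z).getD i 0 = z i := by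
    intro z i
    rw [List.getD_eq_getElem?_getD, List.getElem?_ofFn, dif_pos i.2]; rfl
  have sq : ∀ z : Fin 8 → ℤ, ((List.ofFn z).map fun c => c * c).sum = ∑ i, z i * z i := by
    intro z
    rw [List.map_ofFn, List.sum_ofFn]; rfl
  have le : ∀ z : Fin 8 → ℤ, ∀ i, z i * z i ≤ ∑ i, z i * z i := by
    intro z i
    exact Finset.single_le_sum (f := fun i => z i * z i) (fun j _ => mul_self_nonneg _)
      (Finset.mem_univ i)
  rcases Int.even_or_odd (y 0) with ⟨k, hk⟩ | ⟨k, hk⟩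
  · left
    have : ∀ i, ∃ z, y i = 2 * z := fun i => by
      obtain ⟨l, hl⟩ := hp i
      exact ⟨l + k, by omega⟩
    choose z hz using this
    have hz4 : ∑ i, z i * z i = 4 := by
      have : ∑ i, y i * y i = 4 * ∑ i, z i * z i := by
        rw [Finset.mul_sum]
        refine Finset.sum_congr rfl fun i _ => ?_
        rw [hz]; ring
      omega
    refine ⟨List.ofFn z, ?_, ?_⟩
    · have := mem_enumL [-2, -1, 0, 1, 2] (List.ofFn z) (by
        intro c hc
        obtain ⟨i, rfl⟩ := (List.mem_ofFn' _ _).1 hc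
        have := le z i
        rw [hz4] at this
        have h5 : z i ≤ 2 := by nlinarith
        have h6 : -2 ≤ z i := by nlinarith
        simp only [List.mem_cons, List.not_mem_nil, or_false]
        omega)
      rw [sq, hz4, List.length_ofFn] at this
      unfold evenL
      exact this
    · funext i
      rw [vE, get, ha, hz]; push_cast; ring
  · right
    refine ⟨List.ofFn y, ?_, ?_⟩
    · have := mem_enumL [-3, -1, 1, 3] (List.ofFn y) (by
        intro c hc
        obtain ⟨i, rfl⟩ := (List.mem_ofFn' _ _).1 hc
        have := le y i
        rw [hn] at this
        have h5 : y i ≤ 4 := by nlinarith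
        have h6 : -4 ≤ y i := by nlinarith
        obtain ⟨l, hl⟩ := hp i
        simp only [List.mem_cons, List.not_mem_nil, or_false]
        omega)
      rw [sq, hn, List.length_ofFn] at this
      unfold oddL
      refine List.mem_filter.2 ⟨this, ?_⟩
      rw [List.sum_ofFn]
      simp only [decide_eq_true_eq]
      omega
    · funext i
      rw [vO, get, ha]

/-- The signed vector. -/
def sv (r : Idx × Fin 8 × Bool) : V8 := if r.2.2 then vv r.1 r.2.1 else -vv r.1 r.2.1

lemma sv_cases (r : Idx × Fin 8 × Bool) : sv r = vv r.1 r.2.1 ∨ sv r = -vv r.1 r.2.1 := by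
  unfold sv; split_ifs <;> simp

/-- Vectors are congruent to their negatives. -/
lemma sgn_lat {a b a' b' : V8} (h : a - b ∈ E8lat) (ha : (2 : ℂ) • a' ∈ E8lat)
    (hb : (2 : ℂ) • b' ∈ E8lat) (ea : a = a' ∨ a = -a') (eb : b = b' ∨ b = -b') :
    a' - b' ∈ E8lat := by
  rcases ea with rfl | rfl <;> rcases eb with rfl | rfl
  · exact h
  · convert lat_sub h hb using 1; module
  · convert lat_add h ha using 1; module
  · convert lat_sub (lat_add h ha) hb using 1; module

lemma zero_lat : (0 : V8) ∈ E8lat := by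
  rw [lat_iff]; exact ⟨0, by simp, by simp, by simp⟩

def dom : Finset (Idx × Fin 8 × Bool) := allW.toFinset ×ˢ Finset.univ

lemma mem_dom {r : Idx × Fin 8 × Bool} (h : r ∈ dom) : r.1 ∈ allW := by
  unfold dom at h
  exact List.mem_toFinset.1 (Finset.mem_product.1 h).1

lemma dom_card : dom.card = 2160 := by
  rw [dom, Finset.card_product, List.toFinset_card_of_nodup allW_nodup, allW_length]
  rfl

attribute [irreducible] dom

lemma sv_inj : Set.InjOn sv dom := by
  rintro ⟨q, j, s⟩ hr ⟨q', j', s'⟩ hr' h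
  have hq : q ∈ allW := mem_dom (Finset.mem_coe.1 hr)
  have hq' : q' ∈ allW := mem_dom (Finset.mem_coe.1 hr')
  have hc := sv_cases (q, j, s)
  have hc' := sv_cases (q', j', s')
  obtain rfl : q = q' := vv_sep hq hq' (j := j) (j' := j')
    (sgn_lat (by rw [h, sub_self]; exact zero_lat) ((vv_oct hq).dbl j) ((vv_oct hq').dbl j') hc hc')
  obtain rfl : j = j' := by
    refine oct_inj (vv_oct hq) ?_
    rw [h] at hc
    dsimp only at hc hc'
    rcases hc with e | e <;> rcases hc' with e' | e' <;> rw [e'] at e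
    · left; rw [e]
    · right; rw [e]
    · right; rw [e, neg_neg]
    · left; exact (neg_injective e).symm
  have hn := oct_neg (vv_oct hq) j
  rcases s <;> rcases s' <;> simp [sv] at h ⊢
  · exact hn h.symm
  · exact hn h

lemma valid_vv {q : Idx} (hq : q ∈ allW) (j : Fin 8) : vv q j ∈ Valid :=
  ⟨by rw [(vv_oct hq).orth, if_pos rfl], (vv_oct hq).dbl j⟩

lemma valid_neg {a : V8} (h : a ∈ Valid) : -a ∈ Valid :=
  ⟨by rw [ip_neg_left, ip_neg_right, neg_neg, h.1], by rw [smul_neg]; exact lat_neg h.2⟩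

lemma valid_eq : sv '' dom = Valid := by
  have hf : Valid.Finite := (validF.finite_toSet).subset valid_sub
  refine Set.eq_of_subset_of_ncard_le ?_ ?_ hf
  · rintro _ ⟨⟨q, j, s⟩, hr, rfl⟩
    have hq : q ∈ allW := mem_dom (Finset.mem_coe.1 hr)
    rcases sv_cases (q, j, s) with e | e <;> rw [e]
    · exact valid_vv hq j
    · exact valid_neg (valid_vv hq j)
  · rw [Set.InjOn.ncard_image sv_inj, Set.ncard_coe_finset, dom_card]
    refine (Set.ncard_le_ncard valid_sub validF.finite_toSet).trans ?_
    rw [Set.ncard_coe_finset]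
    exact validF_card

lemma valid_cases {a : V8} (h : a ∈ Valid) :
    ∃ q ∈ allW, ∃ j, a = vv q j ∨ a = -vv q j := by
  rw [← valid_eq] at h
  obtain ⟨⟨q, j, s⟩, hr, rfl⟩ := h
  exact ⟨q, mem_dom (Finset.mem_coe.1 hr), j, sv_cases _⟩

/-! ### Three-frames as three-subsets of the full frames -/

def FS (v : Fin 8 → V8) (S : Finset (Fin 8)) : Set V8 := {a | ∃ j ∈ S, a = v j ∨ a = -v j}

lemma frame_FS {q : Idx} (hq : q ∈ allW) {S : Finset (Fin 8)} (hS : S.card = 3) :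
    IsClFrame 3 (FS (vv q) S) := by
  have ho := vv_oct hq
  refine ⟨fun k => vv q (S.orderEmbOfFin hS k), ?_, fun i j => ?_, fun i j _ => ⟨?_, ?_⟩,
    fun i => ho.dbl _⟩
  · ext a
    constructor
    · rintro ⟨j, hj, h⟩
      have : j ∈ Set.range (S.orderEmbOfFin hS) := by
        rw [Finset.range_orderEmbOfFin]; exact hj
      obtain ⟨k, rfl⟩ := this
      rcases h with rfl | rfl
      · exact Or.inl ⟨k, rfl⟩
      · exact Or.inr ⟨k, rfl⟩
    · rintro (⟨k, rfl⟩ | ⟨k, rfl⟩)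
      · exact ⟨_, Finset.orderEmbOfFin_mem S hS k, Or.inl rfl⟩
      · exact ⟨_, Finset.orderEmbOfFin_mem S hS k, Or.inr rfl⟩
  · rw [ho.orth]
    simp only [EmbeddingLike.apply_eq_iff_eq]
  · have := lat_add (ho.dif (S.orderEmbOfFin hS i) (S.orderEmbOfFin hS j))
      (ho.dbl (S.orderEmbOfFin hS j))
    convert this using 1
    module
  · exact ho.dif _ _

lemma frame_cases {A : Set V8} (h : IsClFrame 3 A) :
    ∃ q ∈ allW, ∃ S : Finset (Fin 8), S.card = 3 ∧ A = FS (vv q) S := by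
  classical
  obtain ⟨a, rfl, ha, hs, hd⟩ := h
  have hv : ∀ k, ∃ q ∈ allW, ∃ j, a k = vv q j ∨ a k = -vv q j := fun k =>
    valid_cases ⟨by rw [ha, if_pos rfl], hd k⟩
  choose q hq j hj using hv
  have hq0 : ∀ k, q k = q 0 := by
    intro k
    rcases eq_or_ne k 0 with rfl | hk
    · rfl
    · have hl : a 0 - a k ∈ E8lat := (hs 0 k (Fin.pos_of_ne_zero hk)).2
      exact (vv_sep (hq 0) (hq k) (sgn_lat hl ((vv_oct (hq 0)).dbl (j 0))
        ((vv_oct (hq k)).dbl (j k)) (hj 0) (hj k))).symm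
  have hj' : ∀ k, a k = vv (q 0) (j k) ∨ a k = -vv (q 0) (j k) := by
    intro k; have := hj k; rwa [hq0 k] at this
  have hinj : Function.Injective j := by
    intro k l hkl
    by_contra hne
    have h1 := ha k l
    rw [if_neg hne] at h1
    have h2 := (vv_oct (hq 0)).orth (j l) (j l)
    rw [if_pos rfl] at h2
    have hk := hj' k
    rw [hkl] at hk
    rcases hk with e | e <;> rcases hj' l with e' | e' <;> rw [e, e'] at h1 <;>
      simp [ip_neg_left, ip_neg_right, h2] at h1
  refine ⟨q 0, hq 0, Finset.univ.image j, ?_, ?_⟩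
  · rw [Finset.card_image_of_injective _ hinj]; rfl
  · ext x
    constructor
    · rintro (⟨k, rfl⟩ | ⟨k, rfl⟩)
      · exact ⟨j k, Finset.mem_image_of_mem _ (Finset.mem_univ k), hj' k⟩
      · refine ⟨j k, Finset.mem_image_of_mem _ (Finset.mem_univ k), ?_⟩
        rcases hj' k with e | e
        · right; simp only [e]
        · left; simp only [e, neg_neg]
    · rintro ⟨m, hm, hx⟩
      obtain ⟨k, -, rfl⟩ := Finset.mem_image.1 hm
      rcases hx with rfl | rfl <;> rcases hj' k with e | e
      · exact Or.inl ⟨k, e⟩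
      · exact Or.inr ⟨k, by simp only [e, neg_neg]⟩
      · exact Or.inr ⟨k, by simp only [e]⟩
      · exact Or.inl ⟨k, e⟩

lemma FS_inj {q q' : Idx} (hq : q ∈ allW) (hq' : q' ∈ allW) {S S' : Finset (Fin 8)}
    (hS : S.card = 3) (h : FS (vv q) S = FS (vv q') S') : q = q' ∧ S = S' := by
  have ex : ∀ {S S' : Finset (Fin 8)}, FS (vv q) S = FS (vv q') S' → ∀ j ∈ S, ∃ j' ∈ S',
      vv q j = vv q' j' ∨ vv q j = -vv q' j' := by
    intro S S' h j hj
    have : vv q j ∈ FS (vv q) S := ⟨j, hj, Or.inl rfl⟩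
    rw [h] at this
    exact this
  obtain ⟨j, hj⟩ : S.Nonempty := Finset.card_pos.1 (by omega)
  obtain ⟨j', -, e⟩ := ex h j hj
  obtain rfl : q = q' := vv_sep hq hq' (j := j) (j' := j')
    (sgn_lat (a := vv q j) (b := vv q j) (by rw [sub_self]; exact zero_lat)
      ((vv_oct hq).dbl j) ((vv_oct hq').dbl j') (Or.inl rfl) e)
  have sub : ∀ {S S' : Finset (Fin 8)}, FS (vv q) S = FS (vv q) S' → S ⊆ S' := by
    intro S S' h k hk
    obtain ⟨k', hk', e⟩ := ex h k hk
    rwa [oct_inj (vv_oct hq) e]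
  exact ⟨rfl, Finset.Subset.antisymm (sub h) (sub h.symm)⟩

def cnt (S : Finset (Fin 8)) : ℕ := (S.filter fun j => j < 2).card

lemma val_true (j : Fin 8) : val true j = 1 / 2 := by simp [val]

lemma val_false (j : Fin 8) : val false j = if j < 2 then 1 else 0 := by simp [val]

section levels

lemma vv_injective {q : Idx} (hq : q ∈ allW) : Function.Injective (vv q) := fun _ _ h =>
  oct_inj (vv_oct hq) (Or.inl h)

lemma level_one {q : Idx} (hq : q ∈ allW) (S : Finset (Fin 8)) (ht : q.1 = false) :
    {a ∈ FS (vv q) S | ip phi8 a = 1}.ncard = cnt S := by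
  have : {a ∈ FS (vv q) S | ip phi8 a = 1} = vv q '' (S.filter fun j => j < 2 : Finset (Fin 8)) := by
    ext a
    constructor
    · rintro ⟨⟨j, hj, rfl | rfl⟩, h⟩
      · refine ⟨j, ?_, rfl⟩
        rw [phi_vv hq, ht, val_false] at h
        split_ifs at h with h2
        · exact Finset.mem_coe.2 (Finset.mem_filter.2 ⟨hj, h2⟩)
        · norm_num at h
      · rw [ip_neg_right, phi_vv hq, ht, val_false] at h
        split_ifs at h <;> norm_num at h
    · rintro ⟨j, hj, rfl⟩
      obtain ⟨hj, h2⟩ := Finset.mem_filter.1 (Finset.mem_coe.1 hj)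
      exact ⟨⟨j, hj, Or.inl rfl⟩, by rw [phi_vv hq, ht, val_false, if_pos h2]⟩
  rw [this, Set.ncard_image_of_injective _ (vv_injective hq), Set.ncard_coe_finset, cnt]

lemma level_neg_one {q : Idx} (hq : q ∈ allW) (S : Finset (Fin 8)) (ht : q.1 = false) :
    {a ∈ FS (vv q) S | ip phi8 a = -1}.ncard = cnt S := by
  rw [← level_one hq S ht]
  have : {a ∈ FS (vv q) S | ip phi8 a = -1} =
      (fun a => -a) '' {a ∈ FS (vv q) S | ip phi8 a = 1} := by
    ext a
    constructor
    · rintro ⟨⟨j, hj, hja⟩, h⟩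
      refine ⟨-a, ⟨⟨j, hj, ?_⟩, by rw [ip_neg_right, h, neg_neg]⟩, neg_neg a⟩
      rcases hja with rfl | rfl <;> simp
    · rintro ⟨a, ⟨⟨j, hj, hja⟩, h⟩, rfl⟩
      refine ⟨⟨j, hj, ?_⟩, by rw [ip_neg_right, h]⟩
      rcases hja with rfl | rfl <;> simp
  rw [this, Set.ncard_image_of_injective _ neg_injective]

lemma level_zero {q : Idx} (hq : q ∈ allW) {S : Finset (Fin 8)} (hS : S.card = 3)
    (ht : q.1 = false) :
    {a ∈ FS (vv q) S | ip phi8 a = 0}.ncard = 2 * (3 - cnt S) := by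
  set F : Finset (Fin 8) := S.filter fun j => ¬ j < 2 with hF
  have hc : F.card = 3 - cnt S := by
    have := Finset.card_filter_add_card_filter_not (s := S) (fun j => j < 2)
    rw [cnt, hF]; omega
  have : {a ∈ FS (vv q) S | ip phi8 a = 0} = vv q '' F ∪ (fun j => -vv q j) '' F := by
    ext a
    constructor
    · rintro ⟨⟨j, hj, hja⟩, h⟩
      have hz : ip phi8 (vv q j) = 0 := by
        rcases hja with rfl | rfl
        · exact h
        · rw [ip_neg_right] at h; exact neg_eq_zero.1 h
      rw [phi_vv hq, ht, val_false] at hz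
      have hjF : j ∈ F := by
        refine Finset.mem_filter.2 ⟨hj, fun h2 => ?_⟩
        rw [if_pos h2] at hz; norm_num at hz
      rcases hja with rfl | rfl
      · exact Or.inl ⟨j, hjF, rfl⟩
      · exact Or.inr ⟨j, hjF, rfl⟩
    · rintro (⟨j, hj, rfl⟩ | ⟨j, hj, rfl⟩) <;>
        obtain ⟨hj, h2⟩ := Finset.mem_filter.1 (Finset.mem_coe.1 hj)
      · exact ⟨⟨j, hj, Or.inl rfl⟩, by rw [phi_vv hq, ht, val_false, if_neg h2]⟩
      · exact ⟨⟨j, hj, Or.inr rfl⟩, by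
          simp only [ip_neg_right, phi_vv hq, ht, val_false, if_neg h2, neg_zero]⟩
  have hd : Disjoint (vv q '' F) ((fun j => -vv q j) '' F) := by
    rw [Set.disjoint_left]
    rintro _ ⟨j, -, rfl⟩ ⟨k, -, h⟩
    have hjk : j = k := oct_inj (vv_oct hq) (Or.inr h.symm)
    subst hjk
    exact oct_neg (vv_oct hq) j h.symm
  rw [this, Set.ncard_union_eq hd ((Finset.finite_toSet F).image _) ((Finset.finite_toSet F).image _),
    Set.ncard_image_of_injective _ (vv_injective hq),
    Set.ncard_image_of_injective _ (fun a b h => vv_injective hq (neg_injective h)),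
    Set.ncard_coe_finset, hc]
  ring

end levels

lemma typeI_iff {q : Idx} (hq : q ∈ allW) {S : Finset (Fin 8)} (hS : S.card = 3) :
    C3TypeI (FS (vv q) S) ↔ q.1 = true := by
  constructor
  · intro h
    by_contra ht
    have ht : q.1 = false := by simpa using ht
    obtain ⟨j, hj⟩ : S.Nonempty := Finset.card_pos.1 (by omega)
    have := h (vv q j) ⟨j, hj, Or.inl rfl⟩
    rw [phi_vv hq, ht, val_false] at this
    split_ifs at this <;> norm_num at this
  · rintro ht _ ⟨j, hj, rfl | rfl⟩
    · left; rw [phi_vv hq, ht, val_true]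
    · right; rw [ip_neg_right, phi_vv hq, ht, val_true]

lemma level_one_true {q : Idx} (hq : q ∈ allW) (S : Finset (Fin 8)) (ht : q.1 = true) :
    {a ∈ FS (vv q) S | ip phi8 a = 1}.ncard = 0 := by
  have : {a ∈ FS (vv q) S | ip phi8 a = 1} = ∅ := by
    ext a
    constructor
    · rintro ⟨⟨j, hj, rfl | rfl⟩, h⟩
      · rw [phi_vv hq, ht, val_true] at h; norm_num at h
      · rw [ip_neg_right, phi_vv hq, ht, val_true] at h; norm_num at h
    · exact fun h => h.elim
  rw [this, Set.ncard_empty]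

lemma typeII0_iff {q : Idx} (hq : q ∈ allW) {S : Finset (Fin 8)} (hS : S.card = 3) :
    C3TypeII0 (FS (vv q) S) ↔ q.1 = false ∧ cnt S = 0 := by
  constructor
  · intro h
    have ht : q.1 = false := by
      by_contra ht
      have ht : q.1 = true := by simpa using ht
      obtain ⟨j, hj⟩ : S.Nonempty := Finset.card_pos.1 (by omega)
      have := h (vv q j) ⟨j, hj, Or.inl rfl⟩
      rw [phi_vv hq, ht, val_true] at this
      norm_num at this
    refine ⟨ht, ?_⟩
    rw [cnt, Finset.card_eq_zero, Finset.filter_eq_empty_iff]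
    intro j hj h2
    have := h (vv q j) ⟨j, hj, Or.inl rfl⟩
    rw [phi_vv hq, ht, val_false, if_pos h2] at this
    norm_num at this
  · rintro ⟨ht, hc⟩
    rw [cnt, Finset.card_eq_zero, Finset.filter_eq_empty_iff] at hc
    rintro _ ⟨j, hj, rfl | rfl⟩
    · rw [phi_vv hq, ht, val_false, if_neg (hc hj)]
    · rw [ip_neg_right, phi_vv hq, ht, val_false, if_neg (hc hj), neg_zero]

lemma typeII1_iff {q : Idx} (hq : q ∈ allW) {S : Finset (Fin 8)} (hS : S.card = 3) :
    C3TypeII1 (FS (vv q) S) ↔ q.1 = false ∧ cnt S = 1 := by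
  unfold C3TypeII1
  rcases ht : q.1
  · rw [level_one hq S ht, level_neg_one hq S ht, level_zero hq hS ht]
    constructor
    · rintro ⟨h, -⟩; exact ⟨rfl, h⟩
    · rintro ⟨-, h⟩; rw [h]; exact ⟨rfl, rfl, rfl⟩
  · rw [level_one_true hq S ht]
    simp

lemma typeII2_iff {q : Idx} (hq : q ∈ allW) {S : Finset (Fin 8)} (hS : S.card = 3) :
    C3TypeII2 (FS (vv q) S) ↔ q.1 = false ∧ cnt S = 2 := by
  unfold C3TypeII2
  rcases ht : q.1
  · rw [level_one hq S ht, level_neg_one hq S ht, level_zero hq hS ht]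
    constructor
    · rintro ⟨h, -⟩; exact ⟨rfl, h⟩
    · rintro ⟨-, h⟩; rw [h]; exact ⟨rfl, rfl, rfl⟩
  · rw [level_one_true hq S ht]
    simp

lemma cnt_le (S : Finset (Fin 8)) : cnt S ≤ 2 := by
  have h : cnt S ≤ ((Finset.univ : Finset (Fin 8)).filter fun j => j < 2).card :=
    Finset.card_le_card (Finset.filter_subset_filter _ (Finset.subset_univ S))
  exact h.trans (by decide)

/-! ### Counting -/

def T3 : Finset (Finset (Fin 8)) := Finset.powersetCard 3 Finset.univ

lemma mem_T3 {S : Finset (Fin 8)} : S ∈ T3 ↔ S.card = 3 := by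
  simp [T3, Finset.mem_powersetCard]

lemma count_frames (t : Bool) (N : ℕ) (hN : (allW.filter fun q => q.1 = t).length = N)
    (T : Finset (Finset (Fin 8))) (hT : T ⊆ T3) (P : Set V8 → Prop)
    (hP : ∀ q ∈ allW, ∀ S : Finset (Fin 8), S.card = 3 → (P (FS (vv q) S) ↔ q.1 = t ∧ S ∈ T)) :
    {A : Set V8 | IsClFrame 3 A ∧ P A}.ncard = N * T.card := by
  set D : Finset (Idx × Finset (Fin 8)) := (allW.filter fun q => q.1 = t).toFinset ×ˢ T with hD
  have hDm : ∀ r, r ∈ D ↔ (r.1 ∈ allW ∧ r.1.1 = t) ∧ r.2 ∈ T := by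
    intro r
    rw [hD, Finset.mem_product, List.mem_toFinset, List.mem_filter, decide_eq_true_eq]
  have e : {A : Set V8 | IsClFrame 3 A ∧ P A} =
      (fun r : Idx × Finset (Fin 8) => FS (vv r.1) r.2) '' (D : Set (Idx × Finset (Fin 8))) := by
    ext A
    constructor
    · rintro ⟨hA, hPA⟩
      obtain ⟨q, hq, S, hS, rfl⟩ := frame_cases hA
      obtain ⟨h1, h2⟩ := (hP q hq S hS).1 hPA
      exact ⟨(q, S), Finset.mem_coe.2 ((hDm _).2 ⟨⟨hq, h1⟩, h2⟩), rfl⟩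
    · rintro ⟨⟨q, S⟩, hr, rfl⟩
      obtain ⟨⟨hq, h1⟩, h2⟩ := (hDm _).1 (Finset.mem_coe.1 hr)
      have hS := mem_T3.1 (hT h2)
      exact ⟨frame_FS hq hS, (hP q hq S hS).2 ⟨h1, h2⟩⟩
  have hinj : Set.InjOn (fun r : Idx × Finset (Fin 8) => FS (vv r.1) r.2)
      (D : Set (Idx × Finset (Fin 8))) := by
    rintro ⟨q, S⟩ hr ⟨q', S'⟩ hr' h
    obtain ⟨⟨hq, -⟩, h2⟩ := (hDm _).1 (Finset.mem_coe.1 hr)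
    obtain ⟨⟨hq', -⟩, -⟩ := (hDm _).1 (Finset.mem_coe.1 hr')
    obtain ⟨rfl, rfl⟩ := FS_inj hq hq' (mem_T3.1 (hT h2)) h
    rfl
  rw [e, Set.InjOn.ncard_image hinj, Set.ncard_coe_finset, hD, Finset.card_product,
    List.toFinset_card_of_nodup (allW_nodup.filter _), hN]

/-! ### Orbits -/

def FrRel (A B : Set V8) : Prop := ∃ w : V8 ≃ₗ[ℂ] V8, w ∈ WE7 ∧ w '' A = B

lemma FrRel.refl (A : Set V8) : FrRel A A := ⟨1, one_mem _, Set.image_id A⟩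

lemma FrRel.trans {A B C : Set V8} : FrRel A B → FrRel B C → FrRel A C := by
  rintro ⟨w, hw, rfl⟩ ⟨u, hu, rfl⟩
  exact ⟨u * w, mul_mem hu hw, Set.image_comp u w A⟩

lemma FrRel.symm {A B : Set V8} : FrRel A B → FrRel B A := by
  rintro ⟨w, hw, rfl⟩
  refine ⟨w⁻¹, inv_mem hw, ?_⟩
  rw [← Set.image_comp]
  have : (w⁻¹ : V8 ≃ₗ[ℂ] V8) ∘ w = id := funext fun x => w.symm_apply_apply x
  rw [this, Set.image_id]

lemma rel_base {q : Idx} (hq : q ∈ allW) (S : Finset (Fin 8)) :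
    FrRel (FS (base q.1) S) (FS (vv q) S) := by
  refine ⟨wordE q, wordE_mem hq, ?_⟩
  ext a
  constructor
  · rintro ⟨b, ⟨j, hj, rfl | rfl⟩, rfl⟩
    · exact ⟨j, hj, Or.inl rfl⟩
    · exact ⟨j, hj, Or.inr (map_neg _ _)⟩
  · rintro ⟨j, hj, rfl | rfl⟩
    · exact ⟨_, ⟨j, hj, Or.inl rfl⟩, rfl⟩
    · exact ⟨_, ⟨j, hj, Or.inr rfl⟩, map_neg _ _⟩

lemma rel_swap (t : Bool) {j k : Fin 8} (hv : val t j = val t k) {S : Finset (Fin 8)}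
    (hj : j ∈ S) (hk : k ∉ S) : FrRel (FS (base t) S) (FS (base t) (insert k (S.erase j))) := by
  have ho := base_oct t
  have hne : j ≠ k := fun h => hk (h ▸ hj)
  have h2 : ip (base t j - base t k) (base t j - base t k) = 2 := by
    simp only [ip_sub_left, ip_sub_right, ho.orth, if_pos, if_neg hne, if_neg hne.symm]
    norm_num
  set r := rf (base t j - base t k) h2 with hr
  have hrm : r ∈ WE7 := rf_mem _ _ (ho.dif j k) (by
    rw [ip_sub_right, phi_base, phi_base, hv, sub_self])
  have rj : r (base t j) = base t k := by
    rw [hr, rf_apply, ip_sub_left, ho.orth, ho.orth, if_pos rfl, if_neg hne.symm]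
    module
  have ro : ∀ m, m ≠ j → m ≠ k → r (base t m) = base t m := by
    intro m h1 h2
    rw [hr, rf_apply, ip_sub_left, ho.orth, ho.orth, if_neg h1.symm, if_neg h2.symm]
    module
  refine ⟨r, hrm, ?_⟩
  have im : ∀ m ∈ S, m ≠ j → r (base t m) = base t m := fun m hm h =>
    ro m h fun h' => hk (h' ▸ hm)
  ext a
  constructor
  · rintro ⟨b, ⟨m, hm, hb⟩, rfl⟩
    by_cases h : m = j
    · subst h
      refine ⟨k, Finset.mem_insert_self _ _, ?_⟩
      rcases hb with rfl | rfl
      · exact Or.inl rj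
      · right; rw [map_neg, rj]
    · refine ⟨m, Finset.mem_insert_of_mem (Finset.mem_erase.2 ⟨h, hm⟩), ?_⟩
      rcases hb with rfl | rfl
      · exact Or.inl (im m hm h)
      · right; rw [map_neg, im m hm h]
  · rintro ⟨m, hm, hb⟩
    rcases Finset.mem_insert.1 hm with rfl | hm
    · rcases hb with rfl | rfl
      · exact ⟨_, ⟨j, hj, Or.inl rfl⟩, rj⟩
      · exact ⟨_, ⟨j, hj, Or.inr rfl⟩, by rw [map_neg, rj]⟩
    · obtain ⟨h, hm⟩ := Finset.mem_erase.1 hm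
      rcases hb with rfl | rfl
      · exact ⟨_, ⟨m, hm, Or.inl rfl⟩, im m hm h⟩
      · exact ⟨_, ⟨m, hm, Or.inr rfl⟩, by rw [map_neg, im m hm h]⟩

lemma descent (t : Bool) (T : Finset (Finset (Fin 8))) (S₀ : Finset (Fin 8))
    (hT : ∀ S ∈ T, S ≠ S₀ → ∃ j ∈ S, j ∉ S₀ ∧ ∃ k ∈ S₀, k ∉ S ∧
      (t = true ∨ (j < 2 ↔ k < 2)) ∧ insert k (S.erase j) ∈ T) :
    ∀ n, ∀ S ∈ T, (S \ S₀).card = n → FrRel (FS (base t) S) (FS (base t) S₀) := by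
  intro n
  induction n using Nat.strong_induction_on with
  | _ n ih =>
    intro S hS hn
    by_cases he : S = S₀
    · rw [he]; exact FrRel.refl _
    obtain ⟨j, hj, hj0, k, hk0, hk, hv, hT'⟩ := hT S hS he
    have hval : val t j = val t k := by
      rcases hv with rfl | h
      · rw [val_true, val_true]
      · unfold val; simp only [h]
    refine (rel_swap t hval hj hk).trans (ih _ ?_ _ hT' rfl)
    rw [← hn]
    apply Finset.card_lt_card
    rw [Finset.ssubset_iff_of_subset]
    · refine ⟨j, Finset.mem_sdiff.2 ⟨hj, hj0⟩, fun h => ?_⟩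
      rcases Finset.mem_insert.1 (Finset.mem_sdiff.1 h).1 with h | h
      · exact hj0 (h ▸ hk0)
      · exact (Finset.mem_erase.1 h).1 rfl
    · intro m hm
      obtain ⟨h1, h2⟩ := Finset.mem_sdiff.1 hm
      rcases Finset.mem_insert.1 h1 with rfl | h
      · exact absurd hk0 h2
      · exact Finset.mem_sdiff.2 ⟨(Finset.mem_erase.1 h).2, h2⟩

lemma orbit (t : Bool) (T : Finset (Finset (Fin 8))) (S₀ : Finset (Fin 8))
    (hT : ∀ S ∈ T, S ≠ S₀ → ∃ j ∈ S, j ∉ S₀ ∧ ∃ k ∈ S₀, k ∉ S ∧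
      (t = true ∨ (j < 2 ↔ k < 2)) ∧ insert k (S.erase j) ∈ T)
    {q q' : Idx} (hq : q ∈ allW) (hq' : q' ∈ allW) (h : q.1 = t) (h' : q'.1 = t)
    {S S' : Finset (Fin 8)} (hS : S ∈ T) (hS' : S' ∈ T) :
    FrRel (FS (vv q) S) (FS (vv q') S') := by
  have r := rel_base hq S
  have r' := rel_base hq' S'
  rw [h] at r
  rw [h'] at r'
  exact r.symm.trans ((descent t T S₀ hT _ S hS rfl).trans
    ((descent t T S₀ hT _ S' hS' rfl).symm.trans r'))

def Tc (n : ℕ) : Finset (Finset (Fin 8)) := T3.filter fun S => cnt S = n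

lemma mem_Tc {n : ℕ} {S : Finset (Fin 8)} : S ∈ Tc n ↔ S.card = 3 ∧ cnt S = n := by
  rw [Tc, Finset.mem_filter, mem_T3]

lemma card_T3 : T3.card = 56 := by decide +kernel
lemma card_Tc0 : (Tc 0).card = 20 := by decide +kernel
lemma card_Tc1 : (Tc 1).card = 30 := by decide +kernel
lemma card_Tc2 : (Tc 2).card = 6 := by decide +kernel

lemma step_T3 : ∀ S ∈ T3, S ≠ {0, 1, 2} → ∃ j ∈ S, j ∉ ({0, 1, 2} : Finset (Fin 8)) ∧
    ∃ k ∈ ({0, 1, 2} : Finset (Fin 8)), k ∉ S ∧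
      (true = true ∨ (j < 2 ↔ k < 2)) ∧ insert k (S.erase j) ∈ T3 := by decide +kernel

lemma step_Tc0 : ∀ S ∈ Tc 0, S ≠ {2, 3, 4} → ∃ j ∈ S, j ∉ ({2, 3, 4} : Finset (Fin 8)) ∧
    ∃ k ∈ ({2, 3, 4} : Finset (Fin 8)), k ∉ S ∧
      (false = true ∨ (j < 2 ↔ k < 2)) ∧ insert k (S.erase j) ∈ Tc 0 := by decide +kernel

lemma step_Tc1 : ∀ S ∈ Tc 1, S ≠ {0, 2, 3} → ∃ j ∈ S, j ∉ ({0, 2, 3} : Finset (Fin 8)) ∧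
    ∃ k ∈ ({0, 2, 3} : Finset (Fin 8)), k ∉ S ∧
      (false = true ∨ (j < 2 ↔ k < 2)) ∧ insert k (S.erase j) ∈ Tc 1 := by decide +kernel

lemma step_Tc2 : ∀ S ∈ Tc 2, S ≠ {0, 1, 2} → ∃ j ∈ S, j ∉ ({0, 1, 2} : Finset (Fin 8)) ∧
    ∃ k ∈ ({0, 1, 2} : Finset (Fin 8)), k ∉ S ∧
      (false = true ∨ (j < 2 ↔ k < 2)) ∧ insert k (S.erase j) ∈ Tc 2 := by decide +kernel

lemma count_II (n : ℕ) (P : Set V8 → Prop)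
    (hP : ∀ q ∈ allW, ∀ S : Finset (Fin 8), S.card = 3 →
      (P (FS (vv q) S) ↔ q.1 = false ∧ cnt S = n)) :
    {A : Set V8 | IsClFrame 3 A ∧ P A}.ncard = 63 * (Tc n).card := by
  refine count_frames false 63 allW_II (Tc n) (Finset.filter_subset _ _) P ?_
  intro q hq S hS
  rw [hP q hq S hS, mem_Tc, and_iff_right hS]

/-- Proposition 3.2: every `C₃`-frame is of exactly one of the four types
I, II₀, II₁, II₂; the numbers of frames of each type are `4032`, `1260`, `1890`, `378`;
and each of the four families is a single `W(E₇)`-orbit. -/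
theorem statement7 :
    (∀ A : Set V8, IsClFrame 3 A →
      (C3TypeI A ∨ C3TypeII0 A ∨ C3TypeII1 A ∨ C3TypeII2 A) ∧
      ¬(C3TypeI A ∧ C3TypeII0 A) ∧ ¬(C3TypeI A ∧ C3TypeII1 A) ∧
      ¬(C3TypeI A ∧ C3TypeII2 A) ∧ ¬(C3TypeII0 A ∧ C3TypeII1 A) ∧
      ¬(C3TypeII0 A ∧ C3TypeII2 A) ∧ ¬(C3TypeII1 A ∧ C3TypeII2 A)) ∧
    {A : Set V8 | IsClFrame 3 A ∧ C3TypeI A}.ncard = 4032 ∧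
    {A : Set V8 | IsClFrame 3 A ∧ C3TypeII0 A}.ncard = 1260 ∧
    {A : Set V8 | IsClFrame 3 A ∧ C3TypeII1 A}.ncard = 1890 ∧
    {A : Set V8 | IsClFrame 3 A ∧ C3TypeII2 A}.ncard = 378 ∧
    (∀ w : V8 ≃ₗ[ℂ] V8, w ∈ WE7 → ∀ A : Set V8,
      (IsClFrame 3 A ∧ C3TypeI A → IsClFrame 3 (⇑w '' A) ∧ C3TypeI (⇑w '' A)) ∧
      (IsClFrame 3 A ∧ C3TypeII0 A → IsClFrame 3 (⇑w '' A) ∧ C3TypeII0 (⇑w '' A)) ∧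
      (IsClFrame 3 A ∧ C3TypeII1 A → IsClFrame 3 (⇑w '' A) ∧ C3TypeII1 (⇑w '' A)) ∧
      (IsClFrame 3 A ∧ C3TypeII2 A → IsClFrame 3 (⇑w '' A) ∧ C3TypeII2 (⇑w '' A))) ∧
    (∀ A B : Set V8, IsClFrame 3 A → IsClFrame 3 B →
      ((C3TypeI A ∧ C3TypeI B) ∨ (C3TypeII0 A ∧ C3TypeII0 B) ∨
        (C3TypeII1 A ∧ C3TypeII1 B) ∨ (C3TypeII2 A ∧ C3TypeII2 B)) →
      ∃ w : V8 ≃ₗ[ℂ] V8, w ∈ WE7 ∧ ⇑w '' A = B) := by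
  refine ⟨?_, ?_, ?_, ?_, ?_, ?_, ?_⟩
  · intro A hA
    obtain ⟨q, hq, S, hS, rfl⟩ := frame_cases hA
    rw [typeI_iff hq hS, typeII0_iff hq hS, typeII1_iff hq hS, typeII2_iff hq hS]
    have hc := cnt_le S
    rcases ht : q.1
    · simp only [Bool.false_eq_true, true_and, false_and, false_or, not_false_eq_true]
      omega
    · simp
  · rw [count_frames true 72 allW_I T3 (Finset.Subset.refl _) C3TypeI, card_T3]
    intro q hq S hS
    rw [typeI_iff hq hS, mem_T3, and_iff_left hS]
  · rw [count_II 0 C3TypeII0 fun q hq S hS => typeII0_iff hq hS, card_Tc0]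
  · rw [count_II 1 C3TypeII1 fun q hq S hS => typeII1_iff hq hS, card_Tc1]
  · rw [count_II 2 C3TypeII2 fun q hq S hS => typeII2_iff hq hS, card_Tc2]
  · intro w hw A
    exact ⟨fun h => ⟨frame_image hw h.1, typeI_image hw h.2⟩,
      fun h => ⟨frame_image hw h.1, typeII0_image hw h.2⟩,
      fun h => ⟨frame_image hw h.1, typeII1_image hw h.2⟩,
      fun h => ⟨frame_image hw h.1, typeII2_image hw h.2⟩⟩
  · intro A B hA hB h
    obtain ⟨q, hq, S, hS, rfl⟩ := frame_cases hA
    obtain ⟨q', hq', S', hS', rfl⟩ := frame_cases hB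
    rw [typeI_iff hq hS, typeII0_iff hq hS, typeII1_iff hq hS, typeII2_iff hq hS,
      typeI_iff hq' hS', typeII0_iff hq' hS', typeII1_iff hq' hS', typeII2_iff hq' hS'] at h
    rcases h with ⟨h, h'⟩ | ⟨⟨h, g⟩, h', g'⟩ | ⟨⟨h, g⟩, h', g'⟩ | ⟨⟨h, g⟩, h', g'⟩
    · exact orbit true T3 _ step_T3 hq hq' h h' (mem_T3.2 hS) (mem_T3.2 hS')
    · exact orbit false (Tc 0) _ step_Tc0 hq hq' h h' (mem_Tc.2 ⟨hS, g⟩) (mem_Tc.2 ⟨hS', g'⟩)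
    · exact orbit false (Tc 1) _ step_Tc1 hq hq' h h' (mem_Tc.2 ⟨hS, g⟩) (mem_Tc.2 ⟨hS', g'⟩)
    · exact orbit false (Tc 2) _ step_Tc2 hq hq' h h' (mem_Tc.2 ⟨hS, g⟩) (mem_Tc.2 ⟨hS', g'⟩)
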